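/- There exist l₀ : ℕ and a sequence ω : ℕ → ℂ with ‖ω l‖ = 1 and ω l ≠ 1 for all l > l₀ and ω l → −1 as l → ∞, such that for each l > l₀ the Hermitian matrices Hₘ(ω l) = (1 − ω l) • (Sₘ : Matrix (Fin 14) (Fin 14) ℂ) + (1 − conj (ω l)) • Sₘᵀ (for every m : ℕ) and H_M(ω l) = (1 − ω l) • (M : Matrix (Fin 12) (Fin 12) ℂ) + (1 − conj (ω l)) • Mᵀ are all nonsingular, and: sig(Hₘ(ω l)) = sig(H_M(ω l)) + 2 or sig(Hₘ(ω l)) = sig(H_M(ω l)) − 2 for all m ≥ l; and sig(Hₘ(ω l)) = sig(H_M(ω l)) for all m with l₀ < m < l. -/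

import Mathlib

/-!
For unimodular `ω` the matrix `Hn m ω` is `HM ω` bordered by two rows and columns, and the border
meets `HM ω` only in the first row. With `t = |1 - ω|²` and `f(ω) = t · (HM ω)⁻¹₀₀`, the Schur
complement of `HM ω` in `Hn m ω` is congruent, for `m ≥ 1`, to `diag (-t m, 1/m - f(ω))`, and its
determinant is `t (m f(ω) - 1)` for every `m` (`schur_eq`, `matSig_Hn`, `Hn_det_ne_zero`). By the law
of inertia (`matSig_of_congr`, `matSig_block`) the signatures of `Hn m ω` and `HM ω` agree when
`f(ω) < 1/m`, and the former is smaller by `2` when `f(ω) > 1/m`.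

The function `f` can be computed explicitly: if `w` is the conjugate of `ω`, then
`HM ω = (1 - ω) (M - w Mᵀ)`, and the vector `adjCol w` solves `(M - w Mᵀ) v = Alex w • e₀`. This gives
`f = Np s / Dp s` for real polynomials in `s = 2 + ω + ω⁻¹`, with `Dp 0 = 1` and `Np s = 84 s + O(s²)`.
So `f` vanishes at `ω = -1` and is positive nearby, and the intermediate value theorem provides
`ω l` at distance tending to `0` from `-1` with `f(ω l) = 1/(l - 1/2)`. Then `f(ω l) > 1/m` exactly for
`m ≥ l`, and `m f(ω l)` is never `1`. Finally `HM (-1) = 2 (M + Mᵀ)` is nonsingular, because `M + Mᵀ`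
is unimodular, hence so is `HM (ω l)` for large `l`.
-/

open Matrix

/-- The Seifert matrix `Sₙ` of the knot `Kₙ`. -/
def Smat (n : ℕ) : Matrix (Fin 14) (Fin 14) ℤ :=
  !![-1, 0, 0, 0, 0, 0, 1, 0, 0, 0, 0, 0, 0, -1;
      1,-1, 0, 0, 0, 0,-1, 1, 0, 0, 0, 0, 0, 0;
      0, 1,-1, 0, 0, 0, 0,-1, 1, 0, 0, 0, 0, 0;
      0, 0, 1,-1, 0, 0, 0, 0,-1, 1, 0, 0, 0, 0;
      0, 0, 0, 1,-1, 0, 0, 0, 0,-1, 1, 0, 0, 0;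
      0, 0, 0, 0, 1,-1, 0, 0, 0, 0,-1, 0, 0, 0;
      0, 0, 0, 0, 0, 0,-1, 0, 0, 0, 0, 0, 0, 0;
      0, 0, 0, 0, 0, 0, 1,-1, 0, 0, 0, 0, 0, 0;
      0, 0, 0, 0, 0, 0, 0, 1,-1, 0, 0, 0, 0, 0;
      0, 0, 0, 0, 0, 0, 0, 0, 1,-1, 0, 0, 0, 0;
      0, 0, 0, 0, 0, 0, 0, 0, 0, 1,-1, 0, 0, 0;
      0, 0, 0, 0, 0, 0, 0, 0, 0, 0, 1,-1, 0, 0;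
      0, 0, 0, 0, 0, 0, 0, 0, 0, 0, 0, 0, -(n:ℤ), (n:ℤ);
      0, 0, 0, 0, 0, 0, 0, 0, 0, 0, 0, 0, (n:ℤ)+1, -((n:ℤ)+1)]

/-- The upper-left 12×12 submatrix of `Sₙ` (independent of `n`): the Seifert
matrix of the torus knot `T(3,7)`. -/
def Mmat : Matrix (Fin 12) (Fin 12) ℤ :=
  (Smat 0).submatrix (Fin.castLE (by omega)) (Fin.castLE (by omega))

/-- `Sₙ` as a complex matrix. -/
def SmatC (n : ℕ) : Matrix (Fin 14) (Fin 14) ℂ := (Smat n).map fun a => (a : ℂ)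

/-- `M` as a complex matrix. -/
def MmatC : Matrix (Fin 12) (Fin 12) ℂ := Mmat.map fun a => (a : ℂ)

/-- The Alexander polynomial `Δ_{K₀}` evaluated at `x`. -/
noncomputable def P0 (x : ℂ) : ℂ :=
  x ^ 12 - x ^ 10 + x ^ 6 - x ^ 4 + 1 - x⁻¹ ^ 4 + x⁻¹ ^ 6 - x⁻¹ ^ 10 + x⁻¹ ^ 12

/-- The Alexander polynomial `Δ_{K₁}` evaluated at `x`. -/
noncomputable def P1 (x : ℂ) : ℂ :=
  2 * x ^ 12 - 3 * x ^ 10 + x ^ 8 + 2 * x ^ 6 - 3 * x ^ 4 + x ^ 2 + 1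
    + x⁻¹ ^ 2 - 3 * x⁻¹ ^ 4 + 2 * x⁻¹ ^ 6 + x⁻¹ ^ 8 - 3 * x⁻¹ ^ 10 + 2 * x⁻¹ ^ 12

/-- The Tristram–Levine form of `Kₘ` at `ω`. -/
noncomputable def Hn (m : ℕ) (ω : ℂ) : Matrix (Fin 14) (Fin 14) ℂ :=
  (1 - ω) • SmatC m + (1 - (starRingEnd ℂ) ω) • (SmatC m)ᵀ

/-- The Tristram–Levine form of `K₀` at `ω`. -/
noncomputable def HM (ω : ℂ) : Matrix (Fin 12) (Fin 12) ℂ :=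
  (1 - ω) • MmatC + (1 - (starRingEnd ℂ) ω) • MmatCᵀ

/-- The signature of a Hermitian complex matrix: the number of positive eigenvalues
minus the number of negative eigenvalues (and `0` for non-Hermitian matrices). -/
noncomputable def matSig {n : ℕ} (H : Matrix (Fin n) (Fin n) ℂ) : ℤ := by
  classical
  exact if h : H.IsHermitian then
    ((Finset.univ.filter fun i => 0 < h.eigenvalues i).card : ℤ) -
    ((Finset.univ.filter fun i => h.eigenvalues i < 0).card : ℤ)
  else 0

/-! ### Inertia under congruence -/

/-- If `Q` pulls the diagonal form `lam` back to the diagonal form `d`, then the two real quadratic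
forms agree at `Q x` and `x`. -/
lemma quad_diag {ι κ : Type*} [Fintype ι] [Fintype κ] [DecidableEq ι] [DecidableEq κ]
    {lam : ι → ℝ} {Q : Matrix ι κ ℂ} {d : κ → ℝ}
    (h : Qᴴ * diagonal (fun i => (lam i : ℂ)) * Q = diagonal (fun k => (d k : ℂ))) (x : κ → ℂ) :
    ∑ i, lam i * Complex.normSq ((Q *ᵥ x) i) = ∑ k, d k * Complex.normSq (x k) := by
  have key : star (Q *ᵥ x) ⬝ᵥ (diagonal (fun i => (lam i : ℂ)) *ᵥ (Q *ᵥ x)) =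
      star x ⬝ᵥ (diagonal (fun k => (d k : ℂ)) *ᵥ x) := by
    rw [← h, star_mulVec, ← dotProduct_mulVec, mulVec_mulVec, mulVec_mulVec, Matrix.mul_assoc]
  have e : ∀ (r : ℝ) (z : ℂ), (starRingEnd ℂ) z * ((r : ℂ) * z) =
      ((r * Complex.normSq z : ℝ) : ℂ) := by
    intro r z
    push_cast
    rw [Complex.normSq_eq_conj_mul_self]
    ring
  simp only [dotProduct, mulVec_diagonal, Pi.star_apply, RCLike.star_def, e] at key
  exact_mod_cast key

/-- A diagonal form admitting a positive definite pullback along `Q : ℂ^κ → ℂ^ι` has at least `κ`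
positive entries: `x ↦ Q x`, followed by projection to the coordinates with positive weight, is
injective, since the form is nonpositive on its kernel. -/
lemma card_le_pos {ι κ : Type*} [Fintype ι] [Fintype κ] [DecidableEq ι] [DecidableEq κ]
    {lam : ι → ℝ} {Q : Matrix ι κ ℂ} {d : κ → ℝ} (hd : ∀ k, 0 < d k)
    (h : Qᴴ * diagonal (fun i => (lam i : ℂ)) * Q = diagonal (fun k => (d k : ℂ))) :
    Fintype.card κ ≤ (Finset.univ.filter fun i => 0 < lam i).card := by
  classical
  let L : (κ → ℂ) →ₗ[ℂ] ({i // 0 < lam i} → ℂ) :=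
    (Q.submatrix (Subtype.val : {i // 0 < lam i} → ι) id).mulVecLin
  have hL : Function.Injective L := by
    rw [injective_iff_map_eq_zero]
    intro x hx
    have hx' : ∀ i, 0 < lam i → (Q *ᵥ x) i = 0 := fun i hi => congrFun hx ⟨i, hi⟩
    have h1 : ∑ i, lam i * Complex.normSq ((Q *ᵥ x) i) ≤ 0 := by
      refine Finset.sum_nonpos fun i _ => ?_
      rcases lt_or_ge 0 (lam i) with hi | hi
      · simp [hx' i hi]
      · exact mul_nonpos_of_nonpos_of_nonneg hi (Complex.normSq_nonneg _)
    rw [quad_diag h x] at h1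
    have h0 : ∀ k ∈ Finset.univ, 0 ≤ d k * Complex.normSq (x k) :=
      fun k _ => mul_nonneg (hd k).le (Complex.normSq_nonneg _)
    have h2 := (Finset.sum_eq_zero_iff_of_nonneg h0).1 (le_antisymm h1 (Finset.sum_nonneg h0))
    ext k
    have := h2 k (Finset.mem_univ k)
    rcases mul_eq_zero.1 this with h3 | h3
    · exact absurd h3 (hd k).ne'
    · simpa using h3
  have := LinearMap.finrank_le_finrank_of_injective hL
  simpa [Fintype.card_subtype] using this

lemma filter_pos_le {ι κ : Type*} [Fintype ι] [Fintype κ] [DecidableEq ι] [DecidableEq κ]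
    {lam : ι → ℝ} {Q : Matrix ι κ ℂ} {d : κ → ℝ}
    (h : Qᴴ * diagonal (fun i => (lam i : ℂ)) * Q = diagonal (fun k => (d k : ℂ))) :
    (Finset.univ.filter fun k => 0 < d k).card ≤ (Finset.univ.filter fun i => 0 < lam i).card := by
  classical
  have := card_le_pos (lam := lam) (Q := Q.submatrix id (Subtype.val : {k // 0 < d k} → κ))
    (d := fun k => d k.1) (fun k => k.2) (by
      have h' := congrArg (fun A => A.submatrix (Subtype.val : {k // 0 < d k} → κ)
        (Subtype.val : {k // 0 < d k} → κ)) h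
      ext i j
      have h'' := congrFun (congrFun h' i) j
      simp only [submatrix_apply] at h''
      have e : diagonal (fun k : {k // 0 < d k} => (d k.1 : ℂ)) i j
          = diagonal (fun k => (d k : ℂ)) i.1 j.1 := by
        simp [diagonal_apply, Subtype.ext_iff]
      rw [e, ← h'']
      rfl)
  rwa [Fintype.card_subtype] at this

/-- Sylvester's law of inertia for a nondegenerate Hermitian form: the signature can be read off from
any diagonal form `Qᴴ H Q` of full size with nonzero entries. `Q` contributes lower bounds for the
numbers of positive and of negative eigenvalues, and these bounds already add up to `n`. -/
lemma matSig_of_congr {n : ℕ} {κ : Type*} [Fintype κ] [DecidableEq κ]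
    {H : Matrix (Fin n) (Fin n) ℂ} (hH : H.IsHermitian) (hc : Fintype.card κ = n)
    {Q : Matrix (Fin n) κ ℂ} {d : κ → ℝ} (hd : ∀ k, d k ≠ 0)
    (h : Qᴴ * H * Q = diagonal (fun k => (d k : ℂ))) :
    matSig H = ((Finset.univ.filter fun k => 0 < d k).card : ℤ) -
      ((Finset.univ.filter fun k => d k < 0).card : ℤ) := by
  classical
  set U : Matrix (Fin n) (Fin n) ℂ := hH.eigenvectorUnitary.1 with hU
  have hs : H = U * diagonal (fun i => (hH.eigenvalues i : ℂ)) * Uᴴ := by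
    conv_lhs => rw [hH.spectral_theorem, Unitary.conjStarAlgAut_apply]
    rfl
  have h1 : (Uᴴ * Q)ᴴ * diagonal (fun i => (hH.eigenvalues i : ℂ)) * (Uᴴ * Q) =
      diagonal (fun k => (d k : ℂ)) := by
    rw [← h]
    conv_rhs => rw [hs]
    simp only [conjTranspose_mul, conjTranspose_conjTranspose, Matrix.mul_assoc]
  have h2 : (Uᴴ * Q)ᴴ * diagonal (fun i => ((-hH.eigenvalues i : ℝ) : ℂ)) * (Uᴴ * Q) =
      diagonal (fun k => ((-d k : ℝ) : ℂ)) := by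
    have e1 : diagonal (fun i => ((-hH.eigenvalues i : ℝ) : ℂ)) =
        -diagonal (fun i => (hH.eigenvalues i : ℂ)) := by
      rw [diagonal_neg]; simp
    have e2 : diagonal (fun k => ((-d k : ℝ) : ℂ)) = -diagonal (fun k => (d k : ℂ)) := by
      rw [diagonal_neg]; simp
    rw [e1, e2, ← h1, Matrix.mul_neg, Matrix.neg_mul]
  have p := filter_pos_le h1
  have q := filter_pos_le h2
  simp only [Left.neg_pos_iff] at q
  have tot : (Finset.univ.filter fun k => 0 < d k).card +
      (Finset.univ.filter fun k => d k < 0).card = n := by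
    have e : (Finset.univ.filter fun k => d k < 0) = Finset.univ.filter fun k => ¬ 0 < d k :=
      Finset.filter_congr fun k _ => by
        rw [not_lt, lt_iff_le_and_ne]
        exact and_iff_left (hd k)
    rw [e, ← hc, ← Finset.card_univ]
    exact Finset.card_filter_add_card_filter_not _
  have tot2 : (Finset.univ.filter fun i => 0 < hH.eigenvalues i).card +
      (Finset.univ.filter fun i => hH.eigenvalues i < 0).card ≤ n := by
    rw [← Finset.card_union_of_disjoint]
    · exact (Finset.card_le_univ _).trans (by simp)
    · rw [Finset.disjoint_filter]
      intro i _ h1 h2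
      exact absurd h1 h2.le.not_gt
  have : matSig H = ((Finset.univ.filter fun i => 0 < hH.eigenvalues i).card : ℤ) -
    ((Finset.univ.filter fun i => hH.eigenvalues i < 0).card : ℤ) := by
    unfold matSig
    rw [dif_pos hH]
  rw [this]
  omega

/-! ### Signature and determinant of a bordered Hermitian matrix -/

/-- If `H` is the block matrix `[A, C; Cᴴ, B]` and `A W = -C`, then `B + Cᴴ W` is the Schur complement
`B - Cᴴ A⁻¹ C`. When it is congruent to a nondegenerate diagonal form `d`, the signature of `H` is
that of `A` plus that of `d`. -/
lemma matSig_block {k n : ℕ} {A : Matrix (Fin k) (Fin k) ℂ} (hA : A.IsHermitian)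
    (hdet : A.det ≠ 0) {H : Matrix (Fin n) (Fin n) ℂ} (hH : H.IsHermitian)
    (e : Fin k ⊕ Fin 2 ≃ Fin n) {C W : Matrix (Fin k) (Fin 2) ℂ} {B R : Matrix (Fin 2) (Fin 2) ℂ}
    (hb : H.submatrix e e = fromBlocks A C Cᴴ B) (hW : A * W = -C)
    {d : Fin 2 → ℝ} (hd : ∀ i, d i ≠ 0)
    (hR : Rᴴ * (B + Cᴴ * W) * R = diagonal (fun i => (d i : ℂ))) :
    matSig H = matSig A + (((Finset.univ.filter fun i => 0 < d i).card : ℤ) -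
      ((Finset.univ.filter fun i => d i < 0).card : ℤ)) := by
  classical
  set U : Matrix (Fin k) (Fin k) ℂ := hA.eigenvectorUnitary.1 with hU
  have hUU : Uᴴ * U = 1 := hA.eigenvectorUnitary.2.1
  have hs : Uᴴ * A * U = diagonal (fun i => (hA.eigenvalues i : ℂ)) := by
    have : A = U * diagonal (fun i => (hA.eigenvalues i : ℂ)) * Uᴴ := by
      conv_lhs => rw [hA.spectral_theorem, Unitary.conjStarAlgAut_apply]
      rfl
    conv_lhs => rw [this]
    rw [show Uᴴ * (U * diagonal (fun i => (hA.eigenvalues i : ℂ)) * Uᴴ) * U =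
      (Uᴴ * U) * diagonal (fun i => (hA.eigenvalues i : ℂ)) * (Uᴴ * U) by
        simp only [Matrix.mul_assoc], hUU]
    simp
  have hne : ∀ i, hA.eigenvalues i ≠ 0 := by
    intro i hi
    apply hdet
    rw [hA.det_eq_prod_eigenvalues]
    exact Finset.prod_eq_zero (Finset.mem_univ i) (by simp [hi])
  have hW' : Wᴴ * A = -Cᴴ := by
    have := congrArg conjTranspose hW
    rwa [conjTranspose_mul, hA.eq, conjTranspose_neg] at this
  have e1 : A * (W * R) + C * R = 0 := by
    rw [← Matrix.mul_assoc, hW]; simp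
  have e2 : Cᴴ * (W * R) + B * R = (B + Cᴴ * W) * R := by
    rw [Matrix.add_mul, Matrix.mul_assoc, add_comm]
  have e3 : (W * R)ᴴ * (A * U) + Rᴴ * (Cᴴ * U) = 0 := by
    rw [conjTranspose_mul, Matrix.mul_assoc, ← Matrix.mul_assoc Wᴴ, hW']; simp
  -- the columns of the congruence are the eigenvectors of `A` and the orthogonalised new vectors
  have key : (fromBlocks U (W * R) 0 R)ᴴ * H.submatrix e e * fromBlocks U (W * R) 0 R =
      diagonal (fun x => ((Sum.elim hA.eigenvalues d x : ℝ) : ℂ)) := by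
    rw [hb, fromBlocks_conjTranspose, Matrix.mul_assoc, fromBlocks_multiply, fromBlocks_multiply]
    rw [e1, e2]
    simp only [conjTranspose_zero, Matrix.zero_mul, Matrix.mul_zero, add_zero, zero_add]
    rw [← Matrix.mul_assoc, hs, ← Matrix.mul_assoc Rᴴ _ R, hR, e3,
      fromBlocks_diagonal]
    congr 1
    ext (i | i) <;> rfl
  have key2 : ((fromBlocks U (W * R) 0 R).submatrix e.symm id)ᴴ * H *
      ((fromBlocks U (W * R) 0 R).submatrix e.symm id) =
      diagonal (fun x => ((Sum.elim hA.eigenvalues d x : ℝ) : ℂ)) := by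
    rw [← key]
    have : H = (H.submatrix e e).submatrix e.symm e.symm := by simp
    conv_lhs => rw [this]
    rw [conjTranspose_submatrix, submatrix_mul_equiv, submatrix_mul_equiv, submatrix_id_id]
  have hc : Fintype.card (Fin k ⊕ Fin 2) = n := by simpa using Fintype.card_congr e
  rw [matSig_of_congr hH hc (by rintro (i | i); exacts [hne i, hd i]) key2]
  have : matSig A = ((Finset.univ.filter fun i => 0 < hA.eigenvalues i).card : ℤ) -
    ((Finset.univ.filter fun i => hA.eigenvalues i < 0).card : ℤ) := by
    unfold matSig
    rw [dif_pos hA]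
  rw [this]

  have cs : ∀ (P : ℝ → Prop) [DecidablePred P],
      (Finset.univ.filter fun x => P (Sum.elim hA.eigenvalues d x)).card =
        (Finset.univ.filter fun i => P (hA.eigenvalues i)).card +
          (Finset.univ.filter fun i => P (d i)).card := by
    intro P _
    simp only [Finset.card_filter, Fintype.sum_sum_type, Sum.elim_inl, Sum.elim_inr]
    rfl
  rw [cs (fun x => 0 < x), cs (fun x => x < 0)]
  push_cast
  ring

lemma det_block {k n : ℕ} {A : Matrix (Fin k) (Fin k) ℂ} {H : Matrix (Fin n) (Fin n) ℂ}
    (e : Fin k ⊕ Fin 2 ≃ Fin n) {C W : Matrix (Fin k) (Fin 2) ℂ} {B : Matrix (Fin 2) (Fin 2) ℂ}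
    (hb : H.submatrix e e = fromBlocks A C Cᴴ B) (hW : A * W = -C) :
    H.det = A.det * (B + Cᴴ * W).det := by
  have h : H.submatrix e e * fromBlocks 1 W 0 1 = fromBlocks A 0 Cᴴ (B + Cᴴ * W) := by
    rw [hb, fromBlocks_multiply]
    simp [hW, add_comm]
  have h' := congrArg det h
  rw [det_mul, det_submatrix_equiv_self, det_fromBlocks_zero₂₁, det_fromBlocks_zero₁₂] at h'
  simpa using h'

/-! ### The blocks of `Hn` and `HM` -/

/-- The first column of the adjugate of `M - w Mᵀ`, as polynomials in `w`. -/
noncomputable def adjCol (w : ℂ) : Fin 12 → ℂ :=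
  ![-1 + w - w ^ 3 + w ^ 4 - w ^ 7 + w ^ 8 - w ^ 10 + w ^ 11,
    -1 + w - w ^ 3 + w ^ 4,
    -1 + w - w ^ 3 + w ^ 5 - w ^ 6 + w ^ 8 - w ^ 9,
    -1 + w - w ^ 4 + w ^ 5 - w ^ 7 + w ^ 8,
    -1 + w,
    -1 + w ^ 2 - w ^ 3 + w ^ 5 - w ^ 6,
    w ^ 6 - w ^ 7 + w ^ 8 - w ^ 10 + w ^ 11,
    -w ^ 5 + 2 * w ^ 6 - w ^ 7 + w ^ 9 - w ^ 10,
    -w ^ 5 + w ^ 6,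
    w ^ 3 - w ^ 4 + w ^ 6 - w ^ 7 + w ^ 8,
    -w ^ 2 + 2 * w ^ 3 - w ^ 4 - w ^ 5 + 2 * w ^ 6 - w ^ 7,
    -w ^ 2 + w ^ 3 - w ^ 5 + w ^ 6]

/-- The Alexander polynomial of `M`, that is `det (M - w Mᵀ)`, as a polynomial in `w`. Only the
identity `(M - w Mᵀ) (adjCol w) = Alex w • e₀` of `adjCol_spec` is used. -/
noncomputable def Alex (w : ℂ) : ℂ :=
  1 - w + w ^ 3 - w ^ 4 + w ^ 6 - w ^ 8 + w ^ 9 - w ^ 11 + w ^ 12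

lemma Mmat_eq : Mmat =
  !![-1, 0, 0, 0, 0, 0, 1, 0, 0, 0, 0, 0;
      1,-1, 0, 0, 0, 0,-1, 1, 0, 0, 0, 0;
      0, 1,-1, 0, 0, 0, 0,-1, 1, 0, 0, 0;
      0, 0, 1,-1, 0, 0, 0, 0,-1, 1, 0, 0;
      0, 0, 0, 1,-1, 0, 0, 0, 0,-1, 1, 0;
      0, 0, 0, 0, 1,-1, 0, 0, 0, 0,-1, 0;
      0, 0, 0, 0, 0, 0,-1, 0, 0, 0, 0, 0;
      0, 0, 0, 0, 0, 0, 1,-1, 0, 0, 0, 0;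
      0, 0, 0, 0, 0, 0, 0, 1,-1, 0, 0, 0;
      0, 0, 0, 0, 0, 0, 0, 0, 1,-1, 0, 0;
      0, 0, 0, 0, 0, 0, 0, 0, 0, 1,-1, 0;
      0, 0, 0, 0, 0, 0, 0, 0, 0, 0, 1,-1] := by
  decide +kernel

set_option maxHeartbeats 2000000 in
lemma adjCol_spec (w : ℂ) :
    (MmatC - w • MmatCᵀ) *ᵥ adjCol w = Pi.single 0 (Alex w) := by
  unfold MmatC adjCol Alex
  rw [Mmat_eq]
  ext i
  fin_cases i <;>
  · simp [Matrix.mulVec, dotProduct, Fin.sum_univ_succ, Fin.succ, Fin.ext_iff]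
    try ring

/-- The inverse of the symmetrised matrix `M + Mᵀ`, which is unimodular. -/
def symInv : Matrix (Fin 12) (Fin 12) ℤ :=
  !![0, 0, -1, -2, -2, -1, 1, 2, 2, 1, 0, 0;
     0, 0, 1, 1, 0, -1, 0, 0, 1, 2, 2, 1;
     -1, 1, 4, 6, 4, 0, -3, -4, -2, 2, 4, 2;
     -2, 1, 6, 8, 6, 1, -5, -7, -4, 1, 4, 2;
     -2, 0, 4, 6, 4, 1, -4, -6, -4, 0, 2, 1;
     -1, -1, 0, 1, 1, 0, -1, -2, -2, -1, 0, 0;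
     1, 0, -3, -5, -4, -1, 2, 4, 3, 0, -2, -1;
     2, 0, -4, -7, -6, -2, 4, 6, 5, 1, -2, -1;
     2, 1, -2, -4, -4, -2, 3, 5, 4, 2, 0, 0;
     1, 2, 2, 1, 0, -1, 0, 1, 2, 2, 2, 1;
     0, 2, 4, 4, 2, 0, -2, -2, 0, 2, 2, 1;
     0, 1, 2, 2, 1, 0, -1, -1, 0, 1, 1, 0]

lemma symInv_spec : (Mmat + Mmatᵀ) * symInv = 1 := by
  decide +kernel

/-- At `ω = -1` the form is `2 (M + Mᵀ)`. -/
lemma det_HM_neg_one : (HM (-1)).det ≠ 0 := by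
  have h1 : HM (-1) = (2 : ℂ) • (Mmat + Mmatᵀ).map (Int.castRingHom ℂ) := by
    ext i j
    simp [HM, MmatC]
    ring
  have h2 : ((Mmat + Mmatᵀ).map (Int.castRingHom ℂ)).det ≠ 0 := by
    have := congrArg (fun A : Matrix (Fin 12) (Fin 12) ℤ => (A.map (Int.castRingHom ℂ)).det)
      symInv_spec
    simp only [Matrix.map_mul, det_mul] at this
    intro h
    rw [h] at this
    simp at this
  rw [h1, det_smul]
  exact mul_ne_zero (by norm_num) h2

lemma continuous_HM : Continuous HM := by
  unfold HM
  fun_prop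

lemma HM_isHermitian (ω : ℂ) : (HM ω).IsHermitian := by
  ext i j
  simp [HM, MmatC, add_comm]

lemma Hn_isHermitian (m : ℕ) (ω : ℂ) : (Hn m ω).IsHermitian := by
  ext i j
  simp [Hn, SmatC, add_comm]

/-- The splitting of the fourteen indices into the first twelve and the last two. -/
def e14 : Fin 12 ⊕ Fin 2 ≃ Fin 14 := finSumFinEquiv

/-- The upper right `12 × 2` block of `Hn m ω`; its only nonzero entry is in the corner. -/
def Cblk (ω : ℂ) : Matrix (Fin 12) (Fin 2) ℂ := fun i j => if i = 0 ∧ j = 1 then ω - 1 else 0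

/-- The lower right `2 × 2` block of `Hn m ω`. -/
noncomputable def Bblk (m : ℕ) (ω : ℂ) : Matrix (Fin 2) (Fin 2) ℂ :=
  !![(1 - ω) * (-(m : ℂ)) + (1 - (starRingEnd ℂ) ω) * (-(m : ℂ)),
     (1 - ω) * m + (1 - (starRingEnd ℂ) ω) * (m + 1);
     (1 - ω) * (m + 1) + (1 - (starRingEnd ℂ) ω) * m,
     (1 - ω) * (-((m : ℂ) + 1)) + (1 - (starRingEnd ℂ) ω) * (-((m : ℂ) + 1))]

lemma Smat_castAdd (m : ℕ) (i j : Fin 12) :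
    Smat m (Fin.castAdd 2 i) (Fin.castAdd 2 j) = Mmat i j := by
  fin_cases i <;> fin_cases j <;> rfl

lemma Smat_right (m : ℕ) (i : Fin 12) (j : Fin 2) :
    Smat m (Fin.castAdd 2 i) (Fin.natAdd 12 j) = if i = 0 ∧ j = 1 then -1 else 0 := by
  fin_cases i <;> fin_cases j <;> rfl

lemma Smat_left (m : ℕ) (i : Fin 2) (j : Fin 12) :
    Smat m (Fin.natAdd 12 i) (Fin.castAdd 2 j) = 0 := by
  fin_cases i <;> fin_cases j <;> rfl

lemma Smat_corner (m : ℕ) (i j : Fin 2) :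
    Smat m (Fin.natAdd 12 i) (Fin.natAdd 12 j) =
      !![-(m : ℤ), (m : ℤ); (m : ℤ) + 1, -((m : ℤ) + 1)] i j := by
  fin_cases i <;> fin_cases j <;> rfl

lemma e14_inl (i : Fin 12) : e14 (Sum.inl i) = Fin.castAdd 2 i := rfl

lemma e14_inr (i : Fin 2) : e14 (Sum.inr i) = Fin.natAdd 12 i := rfl

lemma Hn_blocks (m : ℕ) (ω : ℂ) :
    (Hn m ω).submatrix e14 e14 = fromBlocks (HM ω) (Cblk ω) (Cblk ω)ᴴ (Bblk m ω) := by
  have h12 : (Hn m ω).submatrix (e14 ∘ Sum.inl) (e14 ∘ Sum.inr) = Cblk ω := by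
    ext i j
    simp only [Hn, SmatC, Cblk, submatrix_apply, Function.comp, e14_inl, e14_inr, Matrix.add_apply,
      Matrix.smul_apply, transpose_apply, map_apply, Smat_right, Smat_left]
    split_ifs <;> simp
  ext (i | i) (j | j)
  · simp [Hn, HM, SmatC, MmatC, e14_inl, Smat_castAdd]
  · exact congrFun (congrFun h12 i) j
  · have := congrFun (congrFun (congrArg conjTranspose h12) i) j
    rw [conjTranspose_submatrix, (Hn_isHermitian m ω).eq] at this
    exact this
  · simp only [Hn, SmatC, submatrix_apply, fromBlocks_apply₂₂, e14_inr, Matrix.add_apply,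
      Matrix.smul_apply, transpose_apply, map_apply, Smat_corner]
    fin_cases i <;> fin_cases j <;> simp [Bblk]

/-! ### The Schur complement -/

/-- The solution `W` of `HM ω * W = -Cblk ω` for unimodular `ω` that are not conjugate to a root of
`Alex`. -/
noncomputable def Wblk (ω : ℂ) : Matrix (Fin 12) (Fin 2) ℂ := fun i j =>
  if j = 1 then adjCol ((starRingEnd ℂ) ω) i / Alex ((starRingEnd ℂ) ω) else 0

lemma HM_mul_Wblk {ω : ℂ} (hω : ω * (starRingEnd ℂ) ω = 1)
    (hA : Alex ((starRingEnd ℂ) ω) ≠ 0) : HM ω * Wblk ω = -Cblk ω := by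
  set w := (starRingEnd ℂ) ω with hw
  have h : HM ω = (1 - ω) • (MmatC - w • MmatCᵀ) := by
    have h1 : 1 - w = -((1 - ω) * w) := by linear_combination -hω
    rw [HM, ← hw, h1, smul_sub, smul_smul, neg_smul,
      ← sub_eq_add_neg]
  ext i j
  have h0 : (HM ω * Wblk ω) i j = (1 - ω) * if j = 1 then
      ((MmatC - w • MmatCᵀ) *ᵥ adjCol w) i / Alex w else 0 := by
    rw [h, Matrix.smul_mul, Matrix.smul_apply, smul_eq_mul, mul_apply]
    congr 1
    split_ifs with hj
    · simp only [Wblk, hj, if_true, mulVec, dotProduct, Finset.sum_div, mul_div_assoc]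
      rfl
    · simp [Wblk, hj]
  rw [h0, adjCol_spec]
  by_cases hj : j = 1 <;> by_cases hi : i = 0 <;> simp [Cblk, hj, hi, hA]

/-- The Schur complement in terms of the real numbers `t = |1 - ω|²` (written as the sum of `1 - ω` and
its conjugate) and `f = t · (HM ω)⁻¹₀₀ = (1 - w) (adjCol w)₀ / Alex w`, where `w` is the conjugate
of `ω`. -/
lemma schur_eq (m : ℕ) {ω : ℂ} {t f : ℝ}
    (ht : (t : ℂ) = (1 - ω) + (1 - (starRingEnd ℂ) ω))
    (hA : Alex ((starRingEnd ℂ) ω) ≠ 0)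
    (hf : (1 - (starRingEnd ℂ) ω) * adjCol ((starRingEnd ℂ) ω) 0 =
      f * Alex ((starRingEnd ℂ) ω)) :
    Bblk m ω + (Cblk ω)ᴴ * Wblk ω =
      !![-(t * m : ℂ), t * m + (1 - (starRingEnd ℂ) ω);
         t * m + (1 - ω), -(t * (m + 1) : ℂ) - f] := by
  have hf' : (f : ℂ) = (1 - (starRingEnd ℂ) ω) *
      (adjCol ((starRingEnd ℂ) ω) 0 / Alex ((starRingEnd ℂ) ω)) := by
    field_simp
    exact hf.symm
  have hC : ∀ i j, ((Cblk ω)ᴴ * Wblk ω) i j = if i = 1 ∧ j = 1 then -(f : ℂ) else 0 := by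
    intro i j
    rw [mul_apply, Finset.sum_eq_single 0]
    · rw [hf']
      by_cases hi : i = 1 <;> by_cases hj : j = 1 <;> simp [Cblk, Wblk, hi, hj]
      ring
    · intro b _ hb
      simp [Cblk, hb]
    · simp
  ext i j
  rw [Matrix.add_apply, hC, ht]
  fin_cases i <;> fin_cases j <;> simp [Bblk] <;> ring

lemma sign_count {a b : ℝ} (ha : a < 0) (hb : b ≠ 0) :
    ((Finset.univ.filter fun i => 0 < (![a, b] : Fin 2 → ℝ) i).card : ℤ) -
      ((Finset.univ.filter fun i => (![a, b] : Fin 2 → ℝ) i < 0).card : ℤ) =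
      if 0 < b then 0 else -2 := by
  rcases lt_or_gt_of_ne hb with h | h
  · have e1 : (Finset.univ.filter fun i => 0 < (![a, b] : Fin 2 → ℝ) i) = ∅ := by
      ext i; fin_cases i <;> simp [ha.le, h.le]
    have e2 : (Finset.univ.filter fun i => (![a, b] : Fin 2 → ℝ) i < 0) = Finset.univ := by
      ext i; fin_cases i <;> simp [ha, h]
    rw [e1, e2, if_neg h.not_gt]
    rfl
  · have e1 : (Finset.univ.filter fun i => 0 < (![a, b] : Fin 2 → ℝ) i) = {1} := by
      ext i; fin_cases i <;> simp [ha.le, h]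
    have e2 : (Finset.univ.filter fun i => (![a, b] : Fin 2 → ℝ) i < 0) = {0} := by
      ext i; fin_cases i <;> simp [ha, h.le]
    rw [e1, e2, if_pos h]
    rfl

section Point

variable {ω : ℂ} {t f : ℝ}

/-- The Schur complement has determinant `t (m f - 1)`. -/
lemma Hn_det_ne_zero (hω : ω * (starRingEnd ℂ) ω = 1) (ht0 : 0 < t)
    (ht : (t : ℂ) = (1 - ω) + (1 - (starRingEnd ℂ) ω))
    (hA : Alex ((starRingEnd ℂ) ω) ≠ 0)
    (hf : (1 - (starRingEnd ℂ) ω) * adjCol ((starRingEnd ℂ) ω) 0 =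
      f * Alex ((starRingEnd ℂ) ω)) (hdet : (HM ω).det ≠ 0) {m : ℕ} (hm : (m : ℝ) * f ≠ 1) :
    (Hn m ω).det ≠ 0 := by
  rw [det_block e14 (Hn_blocks m ω) (HM_mul_Wblk hω hA), schur_eq m ht hA hf]
  refine mul_ne_zero hdet ?_
  rw [det_fin_two_of]
  have : -(t * m : ℂ) * (-(t * (m + 1) : ℂ) - f) -
      (t * m + (1 - (starRingEnd ℂ) ω)) * (t * m + (1 - ω)) = ((t * (m * f - 1) : ℝ) : ℂ) := by
    push_cast
    linear_combination (t * m + 1 : ℂ) * ht - hω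
  rw [this]
  exact_mod_cast mul_ne_zero ht0.ne' (sub_ne_zero.2 hm)

/-- For `m > 0` the Schur complement is congruent to `diag (-t m, 1/m - f)`, so its signature is
governed by the sign of `1/m - f`. -/
lemma matSig_Hn (hω : ω * (starRingEnd ℂ) ω = 1) (ht0 : 0 < t)
    (ht : (t : ℂ) = (1 - ω) + (1 - (starRingEnd ℂ) ω))
    (hA : Alex ((starRingEnd ℂ) ω) ≠ 0)
    (hf : (1 - (starRingEnd ℂ) ω) * adjCol ((starRingEnd ℂ) ω) 0 =
      f * Alex ((starRingEnd ℂ) ω)) (hdet : (HM ω).det ≠ 0) {m : ℕ} (hm0 : 0 < m)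
    (hm : (m : ℝ)⁻¹ - f ≠ 0) :
    matSig (Hn m ω) = matSig (HM ω) + if 0 < (m : ℝ)⁻¹ - f then 0 else -2 := by
  have hmR : (0 : ℝ) < m := by exact_mod_cast hm0
  have htm : 0 < t * m := mul_pos ht0 hmR
  have htC : (t : ℂ) ≠ 0 := by exact_mod_cast ht0.ne'
  have hmC : (m : ℂ) ≠ 0 := by exact_mod_cast hm0.ne'
  rw [matSig_block (HM_isHermitian ω) hdet (Hn_isHermitian m ω) e14 (Hn_blocks m ω)
    (HM_mul_Wblk hω hA) (d := ![-(t * m), (m : ℝ)⁻¹ - f])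
    (R := !![1, (t * m + (1 - (starRingEnd ℂ) ω)) / (t * m); 0, 1])]
  · congr 1
    exact sign_count (by linarith) hm
  · intro i
    fin_cases i
    · simpa using ⟨ht0.ne', hm0.ne'⟩
    · simpa using hm
  · rw [schur_eq m ht hA hf]
    ext i j
    fin_cases i <;> fin_cases j
    · simp [mul_apply, Fin.sum_univ_two]
    · simp [mul_apply, Fin.sum_univ_two]
      field_simp
      ring
    · simp [mul_apply, Fin.sum_univ_two]
      field_simp
      ring
    · simp [mul_apply, Fin.sum_univ_two]
      field_simp
      linear_combination hω - (t * m + 1 : ℂ) * ht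

end Point

/-! ### The real functions near `-1` -/

/-- The numerator of `f` as a real polynomial in `s = 2 + ω + ω⁻¹`, which vanishes at `ω = -1`. -/
noncomputable def Np (s : ℝ) : ℝ :=
  84 * s - 217 * s ^ 2 + 189 * s ^ 3 - 75 * s ^ 4 + 14 * s ^ 5 - s ^ 6

/-- The denominator of `f`, the symmetrised Alexander polynomial, as a real polynomial in
`s = 2 + ω + ω⁻¹`. -/
noncomputable def Dp (s : ℝ) : ℝ :=
  1 - 48 * s + 148 * s ^ 2 - 146 * s ^ 3 + 64 * s ^ 4 - 13 * s ^ 5 + s ^ 6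

lemma Alex_eq {w ω : ℂ} {s : ℝ} (h : ω * w = 1) (hs : (s : ℂ) = 2 + ω + w) :
    Alex w = w ^ 6 * Dp s := by
  have hw : w ≠ 0 := right_ne_zero_of_mul_eq_one h
  obtain rfl : ω = w⁻¹ := eq_inv_of_mul_eq_one_left h
  unfold Alex Dp
  push_cast
  rw [hs]
  field_simp
  ring

lemma adjCol_eq {w ω : ℂ} {s : ℝ} (h : ω * w = 1) (hs : (s : ℂ) = 2 + ω + w) :
    (1 - w) * adjCol w 0 = w ^ 6 * Np s := by
  have hw : w ≠ 0 := right_ne_zero_of_mul_eq_one h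
  obtain rfl : ω = w⁻¹ := eq_inv_of_mul_eq_one_left h
  have : adjCol w 0 = -1 + w - w ^ 3 + w ^ 4 - w ^ 7 + w ^ 8 - w ^ 10 + w ^ 11 := rfl
  rw [this]
  unfold Np
  push_cast
  rw [hs]
  field_simp
  ring

lemma Np_ge {s : ℝ} (h0 : 0 ≤ s) (h1 : s ≤ 1 / 100) : s ≤ Np s := by
  unfold Np
  nlinarith [mul_nonneg h0 (sub_nonneg.2 h1), pow_nonneg h0 2, pow_nonneg h0 3, pow_nonneg h0 5,
    mul_nonneg (pow_nonneg h0 3) (sub_nonneg.2 h1), mul_nonneg (pow_nonneg h0 5) (sub_nonneg.2 h1)]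

lemma Dp_bounds {s : ℝ} (h0 : 0 ≤ s) (h1 : s ≤ 1 / 100) : 0 < Dp s ∧ Dp s ≤ 2 := by
  unfold Dp
  constructor <;>
  nlinarith [mul_nonneg h0 (sub_nonneg.2 h1), pow_nonneg h0 2, pow_nonneg h0 3, pow_nonneg h0 5,
    mul_nonneg (pow_nonneg h0 2) (sub_nonneg.2 h1), pow_nonneg h0 4, pow_nonneg h0 6,
    mul_nonneg (pow_nonneg h0 3) (sub_nonneg.2 h1), mul_nonneg (pow_nonneg h0 5) (sub_nonneg.2 h1),
    mul_nonneg (pow_nonneg h0 4) (sub_nonneg.2 h1)]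

/-- There is a point within `4 / l` of `s = 0` at which `f = Np / Dp` equals `1 / (l - 1/2)`. -/
lemma exists_root (l : ℕ) (hl : 400 ≤ l) :
    ∃ s : ℝ, 0 ≤ s ∧ s ≤ 4 / l ∧ ((l : ℝ) - 1 / 2) * Np s = Dp s := by
  have hl' : (400 : ℝ) ≤ l := by exact_mod_cast hl
  have h4 : (0 : ℝ) ≤ 4 / l := by positivity
  have h5 : (4 : ℝ) / l ≤ 1 / 100 := by
    rw [div_le_div_iff₀ (by linarith) (by norm_num)]; linarith
  have hc : ContinuousOn (fun s : ℝ => ((l : ℝ) - 1 / 2) * Np s - Dp s) (Set.Icc 0 (4 / l)) := by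
    unfold Np Dp
    fun_prop
  have key := intermediate_value_Icc h4 hc
  have h0 : (0 : ℝ) ∈ Set.Icc (((l : ℝ) - 1 / 2) * Np 0 - Dp 0)
      (((l : ℝ) - 1 / 2) * Np (4 / l) - Dp (4 / l)) := by
    constructor
    · norm_num [Np, Dp]
    · have a := Np_ge h4 h5
      have b := (Dp_bounds h4 h5).2
      have c : ((l : ℝ) - 1 / 2) * (4 / l) ≥ 2 := by
        rw [ge_iff_le, mul_div_assoc', le_div_iff₀ (by linarith)]; linarith
      have d := mul_le_mul_of_nonneg_left a (by linarith : (0 : ℝ) ≤ (l : ℝ) - 1 / 2)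
      linarith
  obtain ⟨s, ⟨hs0, hs1⟩, hs⟩ := key h0
  exact ⟨s, hs0, hs1, sub_eq_zero.1 hs⟩

/-- The point `ω` of the upper unit semicircle with `2 + ω + ω⁻¹ = s`; it is unimodular only for
`0 ≤ s ≤ 4`, because of the junk value of the square root otherwise. -/
noncomputable def pt (s : ℝ) : ℂ := ⟨-1 + s / 2, Real.sqrt (1 - (-1 + s / 2) ^ 2)⟩

lemma pt_mul_conj {s : ℝ} (h0 : 0 ≤ s) (h1 : s ≤ 1 / 100) :
    pt s * (starRingEnd ℂ) (pt s) = 1 := by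
  rw [Complex.mul_conj, Complex.normSq_apply]
  simp only [pt]
  rw [Real.mul_self_sqrt (by nlinarith)]
  norm_num
  ring

lemma pt_add_conj (s : ℝ) : (s : ℂ) = 2 + pt s + (starRingEnd ℂ) (pt s) := by
  rw [add_assoc, Complex.add_conj]
  simp [pt]
  ring

lemma pt_continuous : Continuous pt := by
  have : pt = fun s => ((-1 + s / 2 : ℝ) : ℂ) +
      ((Real.sqrt (1 - (-1 + s / 2) ^ 2) : ℝ) : ℂ) * Complex.I := by
    ext s
    exact (Complex.mk_eq_add_mul_I _ _)
  rw [this]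
  fun_prop

lemma pt_zero : pt 0 = -1 := by
  apply Complex.ext <;> simp [pt]

lemma eventually_det_HM : ∀ᶠ ω in nhds (-1 : ℂ), (HM ω).det ≠ 0 :=
  continuous_HM.matrix_det.continuousAt.eventually_ne det_HM_neg_one

/-- Lemma 5.4 of the paper at the level of Seifert matrices: there is a sequence
`ω_l → -1` of unit complex numbers such that `σ_{ω_l}(K_m) = σ_{ω_l}(K₀) ± 2` for
`m ≥ l` and `σ_{ω_l}(K_m) = σ_{ω_l}(K₀)` for `l₀ < m < l`. -/
theorem stmt16 :
    ∃ (l₀ : ℕ) (ω : ℕ → ℂ),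
      (∀ l : ℕ, l₀ < l → ‖ω l‖ = 1 ∧ ω l ≠ 1) ∧
      Filter.Tendsto ω Filter.atTop (nhds (-1)) ∧
      ∀ l : ℕ, l₀ < l →
        ((∀ m : ℕ, (Hn m (ω l)).IsHermitian ∧ (Hn m (ω l)).det ≠ 0) ∧
          (HM (ω l)).IsHermitian ∧ (HM (ω l)).det ≠ 0) ∧
        (∀ m : ℕ, l ≤ m →
          matSig (Hn m (ω l)) = matSig (HM (ω l)) + 2 ∨
          matSig (Hn m (ω l)) = matSig (HM (ω l)) - 2) ∧
        (∀ m : ℕ, l₀ < m → m < l →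
          matSig (Hn m (ω l)) = matSig (HM (ω l))) := by
  -- below `400` the value of `σ` is irrelevant
  choose s hs0 hs1 hs using exists_root
  let σ : ℕ → ℝ := fun l => if h : 400 ≤ l then s l h else 0
  have hσ : ∀ l, 400 ≤ l → 0 ≤ σ l ∧ σ l ≤ 4 / l ∧ ((l : ℝ) - 1 / 2) * Np (σ l) = Dp (σ l) := by
    intro l hl
    simp only [σ, dif_pos hl]
    exact ⟨hs0 l hl, hs1 l hl, hs l hl⟩
  have hσ' : ∀ l, 400 ≤ l → 0 ≤ σ l ∧ σ l ≤ 1 / 100 := by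
    intro l hl
    obtain ⟨h0, h1, -⟩ := hσ l hl
    have hlR : (400 : ℝ) ≤ l := by exact_mod_cast hl
    refine ⟨h0, h1.trans ?_⟩
    rw [div_le_div_iff₀ (by linarith) (by norm_num)]
    linarith
  have hσt : Filter.Tendsto σ Filter.atTop (nhds 0) := by
    refine squeeze_zero' (g := fun l : ℕ => (4 : ℝ) / l) ?_ ?_
      (tendsto_const_div_atTop_nhds_zero_nat 4)
    · filter_upwards [Filter.eventually_ge_atTop 400] with l hl using (hσ l hl).1
    · filter_upwards [Filter.eventually_ge_atTop 400] with l hl using (hσ l hl).2.1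
  have hωt : Filter.Tendsto (fun l => pt (σ l)) Filter.atTop (nhds (-1)) := by
    have := (pt_continuous.tendsto 0).comp hσt
    rwa [pt_zero] at this
  obtain ⟨l₁, hl₁⟩ := Filter.eventually_atTop.1 (hωt.eventually eventually_det_HM)
  refine ⟨max l₁ 400, fun l => pt (σ l), ?_, hωt, ?_⟩
  · intro l hl
    obtain ⟨h0, h1⟩ := hσ' l ((le_max_right _ _).trans hl.le)
    refine ⟨?_, fun h => ?_⟩
    · have h2 := pt_mul_conj h0 h1
      rw [Complex.mul_conj, Complex.normSq_eq_norm_sq] at h2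
      have h3 : ‖pt (σ l)‖ ^ 2 = 1 := by exact_mod_cast h2
      exact (pow_eq_one_iff_of_nonneg (norm_nonneg _) two_ne_zero).1 h3
    · have := congrArg Complex.re h
      simp only [pt, Complex.one_re] at this
      linarith
  intro l hl
  have hl400 : 400 ≤ l := (le_max_right _ _).trans hl.le
  have hlR : (400 : ℝ) ≤ l := by exact_mod_cast hl400
  have hdet : (HM (pt (σ l))).det ≠ 0 := hl₁ l ((le_max_left _ _).trans hl.le)
  obtain ⟨h0, h1⟩ := hσ' l hl400
  have h2 := (hσ l hl400).2.2
  have hω := pt_mul_conj h0 h1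
  have hs := pt_add_conj (σ l)
  have hw : (starRingEnd ℂ) (pt (σ l)) ≠ 0 := right_ne_zero_of_mul_eq_one hω
  have hA : Alex ((starRingEnd ℂ) (pt (σ l))) ≠ 0 := by
    rw [Alex_eq hω hs]
    exact mul_ne_zero (pow_ne_zero _ hw) (by exact_mod_cast (Dp_bounds h0 h1).1.ne')
  have ht : ((4 - σ l : ℝ) : ℂ) = (1 - pt (σ l)) + (1 - (starRingEnd ℂ) (pt (σ l))) := by
    push_cast
    linear_combination -hs
  have hlpos : (0 : ℝ) < (l : ℝ) - 1 / 2 := by linarith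
  have hf : (1 - (starRingEnd ℂ) (pt (σ l))) * adjCol ((starRingEnd ℂ) (pt (σ l))) 0 =
      ((((l : ℝ) - 1 / 2)⁻¹ : ℝ) : ℂ) * Alex ((starRingEnd ℂ) (pt (σ l))) := by
    have : Np (σ l) = ((l : ℝ) - 1 / 2)⁻¹ * Dp (σ l) := by
      rw [← h2, inv_mul_cancel_left₀ hlpos.ne']
    rw [Alex_eq hω hs, adjCol_eq hω hs, this, Complex.ofReal_mul]
    ring
  have ht0 : 0 < 4 - σ l := by linarith
  refine ⟨⟨fun m => ⟨Hn_isHermitian _ _, Hn_det_ne_zero hω ht0 ht hA hf hdet ?_⟩,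
    HM_isHermitian _, hdet⟩, fun m hm => Or.inr ?_, fun m hm0 hm => ?_⟩
  -- `m = l - 1/2` is impossible by parity
  · rw [← div_eq_mul_inv, Ne, div_eq_one_iff_eq hlpos.ne']
    intro h
    have h3 : ((2 * m + 1 : ℕ) : ℝ) = ((2 * l : ℕ) : ℝ) := by
      push_cast
      linarith
    have h4 : 2 * m + 1 = 2 * l := by exact_mod_cast h3
    omega
  · have hmR : (l : ℝ) ≤ m := by exact_mod_cast hm
    have h3 : (m : ℝ)⁻¹ - ((l : ℝ) - 1 / 2)⁻¹ < 0 :=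
      sub_neg.2 (inv_strictAnti₀ hlpos (by linarith))
    rw [matSig_Hn hω ht0 ht hA hf hdet (by omega) h3.ne, if_neg h3.not_gt]
    ring
  · have hmp : 0 < m := by omega
    have hmR : (m : ℝ) + 1 ≤ l := by exact_mod_cast hm
    have h3 : 0 < (m : ℝ)⁻¹ - ((l : ℝ) - 1 / 2)⁻¹ :=
      sub_pos.2 (inv_strictAnti₀ (by exact_mod_cast hmp) (by linarith))
    rw [matSig_Hn hω ht0 ht hA hf hdet hmp h3.ne', if_pos h3, add_zero]
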